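/- Let A ∈ ℝ^{m×n} have unit-norm rows a_1,…,a_m, let x, x_k ∈ ℝ^n, b = Ax, and let b̂ = b + c where c is supported on C ⊆ {1,…,m} with |C| ≤ βm. Fix q ∈ (0,1), α ∈ (0,1] with α(1−q) > β. Let S ⊆ C be nonempty with every i ∈ S satisfying |⟨a_i, x_k⟩ − b̂_i| ≤ σ_max(A)/√(m[α(1−q) − β]) · ‖x_k − x‖, and for i ∈ S set v_i = (b̂_i − ⟨a_i, x_k⟩) a_i. Then the average cross term satisfies (2/|S|) Σ_{i ∈ S} ⟨x_k − x, v_i⟩ ≤ (2/√|S|)·σ_max(A)²/√(m[α(1−q) − β]) · ‖x_k − x‖². -/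

import Mathlib

open Finset

/-- The largest singular value of `A`, i.e. `sup_{‖x‖ = 1} ‖A x‖` (Euclidean norms). -/
noncomputable def sigmaMax {m n : ℕ} (A : Matrix (Fin m) (Fin n) ℝ) : ℝ :=
  sSup {r : ℝ | ∃ x : Fin n → ℝ, (∑ j, (x j) ^ 2) = 1 ∧
    r = Real.sqrt (∑ i, (∑ j, A i j * x j) ^ 2)}

theorem sigmaMax_nonneg_aux {m n : ℕ} (A : Matrix (Fin m) (Fin n) ℝ) : 0 ≤ sigmaMax A := by
  apply Real.sSup_nonneg
  rintro r ⟨x, _, rfl⟩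
  exact Real.sqrt_nonneg _

theorem sigmaMax_bound_aux {m n : ℕ} (A : Matrix (Fin m) (Fin n) ℝ) (e : Fin n → ℝ) :
    Real.sqrt (∑ i, (∑ j, A i j * e j) ^ 2) ≤ sigmaMax A * Real.sqrt (∑ j, (e j) ^ 2) := by
  have hnn : 0 ≤ ∑ j, (e j) ^ 2 := Finset.sum_nonneg fun _ _ => sq_nonneg _
  rcases hnn.eq_or_lt with h0 | hpos
  · have he : ∀ j, e j = 0 := by
      intro j
      have := (Finset.sum_eq_zero_iff_of_nonneg (fun j _ => sq_nonneg (e j))).1 h0.symm j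
        (Finset.mem_univ j)
      exact pow_eq_zero_iff (two_ne_zero) |>.1 this
    simp [he]
  · set N := Real.sqrt (∑ j, (e j) ^ 2) with hN
    have hNpos : 0 < N := Real.sqrt_pos.2 hpos
    have hNsq : N ^ 2 = ∑ j, (e j) ^ 2 := Real.sq_sqrt hnn
    have hmem : Real.sqrt (∑ i, (∑ j, A i j * (e j / N)) ^ 2) ≤ sigmaMax A := by
      apply le_csSup
      · refine ⟨Real.sqrt (∑ i, ∑ j, (A i j) ^ 2), ?_⟩
        rintro r ⟨y, hy, rfl⟩
        apply Real.sqrt_le_sqrt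
        apply Finset.sum_le_sum
        intro i _
        have := Finset.sum_mul_sq_le_sq_mul_sq Finset.univ (fun j => A i j) y
        rwa [hy, mul_one] at this
      · refine ⟨fun j => e j / N, ?_, rfl⟩
        simp only [div_pow]
        rw [← Finset.sum_div, ← hNsq, div_self (by positivity)]
    have heq : ∑ i, (∑ j, A i j * (e j / N)) ^ 2 = (∑ i, (∑ j, A i j * e j) ^ 2) / N ^ 2 := by
      rw [Finset.sum_div]
      refine Finset.sum_congr rfl fun i _ => ?_
      rw [← div_pow, Finset.sum_div]
      simp only [mul_div_assoc]
    rw [heq, Real.sqrt_div' _ (by positivity), Real.sqrt_sq hNpos.le, div_le_iff₀ hNpos] at hmem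
    exact hmem

/-- **Cross-term bound.**  If `A` has unit-norm rows, `b = Ax`, `b̂ = b + c` with `c`
supported on `C`, `|C| ≤ βm`, `q ∈ (0,1)`, `α ∈ (0,1]` with `α(1-q) > β`, and `S ⊆ C` is
nonempty with every `i ∈ S` satisfying `|⟨a_i, x_k⟩ - b̂_i| ≤ σ_max(A)/√(m[α(1-q) - β])·‖x_k - x‖`,
then, with `v_i = (b̂_i - ⟨a_i, x_k⟩) a_i`, the average cross term satisfies
`(2/|S|) Σ_{i ∈ S} ⟨x_k - x, v_i⟩ ≤ (2/√|S|)·σ_max(A)²/√(m[α(1-q) - β]) · ‖x_k - x‖²`. -/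
theorem cross_term_bound {m n : ℕ}
    (A : Matrix (Fin m) (Fin n) ℝ) (hrows : ∀ i, ∑ j, (A i j) ^ 2 = 1)
    (x xk : Fin n → ℝ) (b c bhat : Fin m → ℝ)
    (hb : ∀ i, b i = ∑ j, A i j * x j)
    (hbhat : ∀ i, bhat i = b i + c i)
    (C : Finset (Fin m)) (hsupp : ∀ i, c i ≠ 0 → i ∈ C)
    (β : ℝ) (hC : (C.card : ℝ) ≤ β * (m : ℝ))
    (q : ℝ) (hq0 : 0 < q) (hq1 : q < 1)
    (α : ℝ) (hα0 : 0 < α) (hα1 : α ≤ 1)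
    (hαqβ : β < α * (1 - q))
    (S : Finset (Fin m)) (hSC : S ⊆ C) (hS : S.Nonempty)
    (hres : ∀ i ∈ S, |(∑ j, A i j * xk j) - bhat i|
      ≤ sigmaMax A / Real.sqrt ((m : ℝ) * (α * (1 - q) - β)) *
          Real.sqrt (∑ j, (xk j - x j) ^ 2)) :
    (2 / (S.card : ℝ)) *
        ∑ i ∈ S, ∑ j, (xk j - x j) * ((bhat i - ∑ j', A i j' * xk j') * A i j)
      ≤ 2 / Real.sqrt (S.card : ℝ) *
          (sigmaMax A ^ 2 / Real.sqrt ((m : ℝ) * (α * (1 - q) - β))) *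
        ∑ j, (xk j - x j) ^ 2 := by
  have hσ := sigmaMax_nonneg_aux A
  have hop := sigmaMax_bound_aux A (fun j => xk j - x j)
  have hEnn : 0 ≤ ∑ j, (xk j - x j) ^ 2 := Finset.sum_nonneg fun _ _ => sq_nonneg _
  have hsq := Real.sq_sqrt hEnn
  set N := Real.sqrt (∑ j, (xk j - x j) ^ 2) with hN
  have hNnn : 0 ≤ N := Real.sqrt_nonneg _
  set D := Real.sqrt ((m : ℝ) * (α * (1 - q) - β)) with hD
  have hDnn : 0 ≤ D := Real.sqrt_nonneg _
  have hK : 0 ≤ sigmaMax A / D * N := by positivity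
  rw [← hsq]
  set t : Fin m → ℝ := fun i => ∑ j, A i j * (xk j - x j) with ht
  have hcard : (0 : ℝ) < S.card := by exact_mod_cast hS.card_pos
  set s := Real.sqrt (S.card : ℝ) with hs
  have hspos : 0 < s := Real.sqrt_pos.2 hcard
  have hssq : s ^ 2 = S.card := Real.sq_sqrt hcard.le
  have h1 : ∑ i ∈ S, ∑ j, (xk j - x j) * ((bhat i - ∑ j', A i j' * xk j') * A i j)
      ≤ ∑ i ∈ S, (sigmaMax A / D * N) * |t i| := by
    apply Finset.sum_le_sum
    intro i hi
    have : ∑ j, (xk j - x j) * ((bhat i - ∑ j', A i j' * xk j') * A i j)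
        = (bhat i - ∑ j', A i j' * xk j') * t i := by
      rw [ht, Finset.mul_sum]
      exact Finset.sum_congr rfl fun j _ => by ring
    rw [this]
    refine (le_abs_self _).trans ?_
    rw [abs_mul, abs_sub_comm]
    exact mul_le_mul_of_nonneg_right (hres i hi) (abs_nonneg _)
  have h2 : ∑ i ∈ S, |t i| ≤ s * Real.sqrt (∑ i, t i ^ 2) := by
    rw [hs, ← Real.sqrt_mul hcard.le]
    apply Real.le_sqrt_of_sq_le
    refine (sq_sum_le_card_mul_sum_sq (s := S) (f := fun i => |t i|)).trans ?_
    apply mul_le_mul_of_nonneg_left _ hcard.le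
    simp only [sq_abs]
    exact Finset.sum_le_sum_of_subset_of_nonneg (Finset.subset_univ _) fun _ _ _ => sq_nonneg _
  have h3 : ∑ i ∈ S, |t i| ≤ s * (sigmaMax A * N) :=
    h2.trans (mul_le_mul_of_nonneg_left hop hspos.le)
  rw [← Finset.mul_sum] at h1
  have h4 := h1.trans (mul_le_mul_of_nonneg_left h3 hK)
  rw [← hssq]
  refine (mul_le_mul_of_nonneg_left h4 (by positivity)).trans (le_of_eq ?_)
  have : 2 / s ^ 2 * s = 2 / s := by field_simp
  rw [← this]
  ring
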